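/- Let F1 and F2 be S4F standpoint structures over the same atoms A and standpoint names S with F1 ⊴ F2, and suppose F2 is an S5 standpoint structure. Then for every formula φ and every u ∈ S: if F2 ⊩ ¬□_u φ then F1 ⊩ ¬□_u φ. -/

import Mathlib

/-- Formulas of S4F standpoint logic over atoms `A` and standpoint names `S`. -/
inductive SForm (A S : Type) : Type
  | atom : A → SForm A S
  | neg  : SForm A S → SForm A S
  | and  : SForm A S → SForm A S → SForm A S
  | box  : S → SForm A S → SForm A S

/-- Expressions: formulas or sharpening statements `s ≼ u`. -/
inductive SExpr (A S : Type) : Type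
  | form  : SForm A S → SExpr A S
  | sharp : S → S → SExpr A S

/-- S4F standpoint structures over a carrier type `P` of precisifications. -/
structure SFFS (A S P : Type) (star : S) where
  Pi : Set P
  sig : S → Set P
  tau : S → Set P
  val : P → Set A
  nonempty_Pi : Pi.Nonempty
  sig_sub : ∀ s, sig s ⊆ Pi
  tau_sub : ∀ s, tau s ⊆ Pi
  star_union : sig star ∪ tau star = Pi
  sig_nonempty : ∀ s, (sig s).Nonempty
  sig_tau_disj : ∀ s u, sig s ∩ tau u = ∅

/-- Pointed satisfaction `F, π ⊩ φ` for formulas. -/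
def SFFS.sat {A S P : Type} {star : S} (F : SFFS A S P star) : SForm A S → P → Prop
  | SForm.atom p, π => p ∈ F.val π
  | SForm.neg φ, π => ¬ F.sat φ π
  | SForm.and φ ψ, π => F.sat φ π ∧ F.sat ψ π
  | SForm.box s φ, π =>
      (π ∈ F.sig star → ∀ π' ∈ F.sig s, F.sat φ π') ∧
      (π ∈ F.tau star → ∀ π' ∈ F.sig s ∪ F.tau s, F.sat φ π')

/-- Pointed satisfaction for expressions. -/
def SFFS.satE {A S P : Type} {star : S} (F : SFFS A S P star) (e : SExpr A S) (π : P) : Prop :=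
  match e with
  | SExpr.form φ => F.sat φ π
  | SExpr.sharp s u => F.sig s ⊆ F.sig u ∧ F.tau s ⊆ F.tau u

/-- Global satisfaction `F ⊩ φ` of a formula. -/
def SFFS.models {A S P : Type} {star : S} (F : SFFS A S P star) (φ : SForm A S) : Prop :=
  ∀ π ∈ F.Pi, F.sat φ π

/-- Global satisfaction of an expression. -/
def SFFS.modelsE {A S P : Type} {star : S} (F : SFFS A S P star) (e : SExpr A S) : Prop :=
  ∀ π ∈ F.Pi, F.satE e π

/-- `F` is a model of a theory (set of expressions) `T`. -/
def SFFS.isModel {A S P : Type} {star : S} (F : SFFS A S P star) (T : Set (SExpr A S)) : Prop :=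
  ∀ e ∈ T, F.modelsE e

/-- `F` is a model of a set of formulas `T`. -/
def SFFS.isModelF {A S P : Type} {star : S} (F : SFFS A S P star) (T : Set (SForm A S)) : Prop :=
  ∀ φ ∈ T, F.models φ

/-- S5 standpoint structures: all outer sets empty. -/
def SFFS.IsS5 {A S P : Type} {star : S} (F : SFFS A S P star) : Prop :=
  ∀ s, F.tau s = ∅

/-- Determination preorder `F1 ⊴_s F2`, per standpoint. -/
def prefS {A S P1 P2 : Type} {star : S} (F1 : SFFS A S P1 star) (F2 : SFFS A S P2 star)
    (s : S) : Prop :=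
  F2.val '' F2.sig s = F1.val '' F1.sig s ∧
  F2.val '' F2.tau s ⊆ F1.val '' (F1.sig s ∪ F1.tau s)

/-- Determination preorder `F1 ⊴ F2`. -/
def pref {A S P1 P2 : Type} {star : S} (F1 : SFFS A S P1 star) (F2 : SFFS A S P2 star) : Prop :=
  ∀ s, prefS F1 F2 s

/-- Entailment `T ⊨ e`: every model of `T` satisfies `e`. -/
def Entails {A S : Type} (star : S) (T : Set (SExpr A S)) (e : SExpr A S) : Prop :=
  ∀ (P : Type) (F : SFFS A S P star), F.isModel T → F.modelsE e

/-- Derivable sharpening `T ⊢ s ≼ u`. -/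
inductive Sharpens {A S : Type} (star : S) (T : Set (SExpr A S)) : S → S → Prop
  | of_mem {s u : S} : SExpr.sharp s u ∈ T → Sharpens star T s u
  | to_star (s : S) : Sharpens star T s star
  | refl (s : S) : Sharpens star T s s
  | trans {s t u : S} : SExpr.sharp s t ∈ T → Sharpens star T t u → Sharpens star T s u

/-- An S5 standpoint structure `F` is a minimal model of a theory `T`. -/
def isMinimalModel {A S P : Type} {star : S} (F : SFFS A S P star) (T : Set (SExpr A S)) : Prop :=
  F.IsS5 ∧ F.isModel T ∧
  ∀ (P' : Type) (F' : SFFS A S P' star), pref F' F → F'.isModel T → (pref F' F ∧ pref F F')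

/-!
A precisification in `σ(*)` evaluates every box over inner precisifications only, and these again
lie in `σ(*)`; so the truth of a formula there depends only on the valuation of the precisification
and on the sets of valuations `γ(σ(s))`, which `⊴` preserves. Moreover `F ⊩ ¬□_u φ` is already
decided inside `σ(u)`: as `σ(*)` is nonempty it demands a counterexample to `φ` in `σ(u)`, and such
a counterexample refutes `□_u φ` at every precisification, since outer ones quantify over a superset
of `σ(u)`.
-/

theorem forall_mem_iff_forall_mem_of_image_eq {α β γ : Type*} {f : α → γ} {g : β → γ}
    {s : Set α} {t : Set β} {p : α → Prop} {q : β → Prop} (himage : f '' s = g '' t)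
    (hpq : ∀ x ∈ s, ∀ y ∈ t, f x = g y → (p x ↔ q y)) :
    (∀ x ∈ s, p x) ↔ ∀ y ∈ t, q y := by
  constructor
  · intro hp y hy
    obtain ⟨x, hx, hxy⟩ : g y ∈ f '' s := himage ▸ Set.mem_image_of_mem g hy
    exact (hpq x hx y hy hxy).1 (hp x hx)
  · intro hq x hx
    obtain ⟨y, hy, hyx⟩ : f x ∈ g '' t := himage ▸ Set.mem_image_of_mem f hx
    exact (hpq x hx y hy hyx.symm).2 (hq y hy)

namespace SFFS

section Structure

variable {A S P : Type} {star : S} (F : SFFS A S P star)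

theorem disjoint_sig_tau (s u : S) : Disjoint (F.sig s) (F.tau u) :=
  Set.disjoint_iff_inter_eq_empty.2 (F.sig_tau_disj s u)

theorem mem_sig_star_or_mem_tau_star {π : P} (hπ : π ∈ F.Pi) :
    π ∈ F.sig star ∨ π ∈ F.tau star := by
  rwa [← F.star_union] at hπ

theorem sig_subset_sig_star (s : S) : F.sig s ⊆ F.sig star := fun _ hπ =>
  (F.mem_sig_star_or_mem_tau_star (F.sig_sub s hπ)).resolve_right
    ((F.disjoint_sig_tau s star).notMem_of_mem_left hπ)

theorem sat_box_iff_of_mem_sig_star {π : P} (hπ : π ∈ F.sig star) (s : S) (φ : SForm A S) :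
    F.sat (.box s φ) π ↔ ∀ π' ∈ F.sig s, F.sat φ π' :=
  have hπ_tau : π ∉ F.tau star := (F.disjoint_sig_tau star star).notMem_of_mem_left hπ
  ⟨fun hbox => hbox.1 hπ, fun hφ => ⟨fun _ => hφ, fun htau => absurd htau hπ_tau⟩⟩

variable {F}

theorem sat_of_sat_box {π π' : P} {s : S} {φ : SForm A S} (hbox : F.sat (.box s φ) π)
    (hπ : π ∈ F.Pi) (hπ' : π' ∈ F.sig s) : F.sat φ π' :=
  (F.mem_sig_star_or_mem_tau_star hπ).elim (fun hsig => hbox.1 hsig π' hπ')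
    (fun htau => hbox.2 htau π' (.inl hπ'))

theorem models_neg_box_iff {u : S} {φ : SForm A S} :
    F.models (.neg (.box u φ)) ↔ ¬ ∀ π ∈ F.sig u, F.sat φ π := by
  constructor
  · intro hmodels hφ
    obtain ⟨π, hπ⟩ := F.sig_nonempty star
    exact hmodels π (F.sig_sub star hπ) ((F.sat_box_iff_of_mem_sig_star hπ u φ).2 hφ)
  · exact fun hφ π hπ hbox => hφ fun _ hπ' => sat_of_sat_box hbox hπ hπ'

end Structure

section InnerEquiv

variable {A S P₁ P₂ : Type} {star : S} {F₁ : SFFS A S P₁ star} {F₂ : SFFS A S P₂ star}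

/-- Inner equivalence `γ₁(σ₁(s)) = γ₂(σ₂(s))` for all `s`: the part of `F₁ ⊴ F₂` that constrains
the inner sets, which is symmetric and leaves the outer sets `τ(s)` arbitrary. -/
def InnerEquiv (F₁ : SFFS A S P₁ star) (F₂ : SFFS A S P₂ star) : Prop :=
  ∀ s, F₁.val '' F₁.sig s = F₂.val '' F₂.sig s

theorem InnerEquiv.sat_iff (h : F₁.InnerEquiv F₂) (φ : SForm A S) {π₁ : P₁} {π₂ : P₂}
    (hπ₁ : π₁ ∈ F₁.sig star) (hπ₂ : π₂ ∈ F₂.sig star) (hval : F₁.val π₁ = F₂.val π₂) :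
    F₁.sat φ π₁ ↔ F₂.sat φ π₂ := by
  induction φ generalizing π₁ π₂ with
  | atom p => simp only [sat, hval]
  | neg φ ih => exact not_congr (ih hπ₁ hπ₂ hval)
  | and φ ψ ihφ ihψ => exact and_congr (ihφ hπ₁ hπ₂ hval) (ihψ hπ₁ hπ₂ hval)
  | box s φ ih =>
    rw [sat_box_iff_of_mem_sig_star F₁ hπ₁, sat_box_iff_of_mem_sig_star F₂ hπ₂]
    exact forall_mem_iff_forall_mem_of_image_eq (h s) fun _ hx _ hy =>
      ih (F₁.sig_subset_sig_star s hx) (F₂.sig_subset_sig_star s hy)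

theorem InnerEquiv.forall_mem_sig_sat_iff (h : F₁.InnerEquiv F₂) (s : S) (φ : SForm A S) :
    (∀ π ∈ F₁.sig s, F₁.sat φ π) ↔ ∀ π ∈ F₂.sig s, F₂.sat φ π :=
  forall_mem_iff_forall_mem_of_image_eq (h s) fun _ hx _ hy =>
    h.sat_iff φ (F₁.sig_subset_sig_star s hx) (F₂.sig_subset_sig_star s hy)

end InnerEquiv

end SFFS

theorem pref.innerEquiv {A S P₁ P₂ : Type} {star : S} {F₁ : SFFS A S P₁ star}
    {F₂ : SFFS A S P₂ star} (h : pref F₁ F₂) : F₁.InnerEquiv F₂ :=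
  fun s => (h s).1.symm

theorem negbox_global_passing_of_pref_general {A S P₁ P₂ : Type} {star : S}
    {F₁ : SFFS A S P₁ star} {F₂ : SFFS A S P₂ star} (h : F₁.InnerEquiv F₂)
    (φ : SForm A S) (u : S) :
    F₁.models (SForm.neg (SForm.box u φ)) ↔ F₂.models (SForm.neg (SForm.box u φ)) := by
  rw [SFFS.models_neg_box_iff, SFFS.models_neg_box_iff, h.forall_mem_sig_sat_iff]

/-- If `F1 ⊴ F2` and `F2` is S5, then `F2 ⊩ ¬□_u φ` implies `F1 ⊩ ¬□_u φ`. -/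
theorem negbox_global_passing_of_pref {A S P1 P2 : Type} (star : S)
    (F1 : SFFS A S P1 star) (F2 : SFFS A S P2 star) (h : pref F1 F2) (hS5 : F2.IsS5)
    (φ : SForm A S) (u : S) :
    F2.models (SForm.neg (SForm.box u φ)) → F1.models (SForm.neg (SForm.box u φ)) :=
  (negbox_global_passing_of_pref_general h.innerEquiv φ u).2
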